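/- arXiv:2504.19540 — 4 statements merged into one kernel-verified Lean document; each statement's English description precedes it below -/
import Mathlib

section
/- Discrete-time ISS from an ISS-Lyapunov function. Let c > 0, let γ : ℝ≥0 → ℝ≥0 be a K∞-function, and let α : ℝ≥0 → ℝ≥0 be a K-function. Then there exist a KL-function β : ℝ≥0 × ℕ → ℝ≥0 and a K-function σ : ℝ≥0 → ℝ≥0, depending only on c, γ, α, such that: for every ŵ ≥ 0, every function V : ℝ^n → ℝ≥0, and every sequence (y_k)_{k∈ℕ} in ℝ^n satisfying c‖y_k‖² ≤ V(y_k) ≤ γ(‖y_k‖) and V(y_{k+1}) ≤ V(y_k) − c‖y_k‖² + α(ŵ) for all k, one has ‖y_k‖ ≤ β(‖y_0‖, k) + σ(ŵ) for all k ∈ ℕ. -/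
open scoped NNReal

/-- A K-function: continuous, strictly increasing, vanishing at zero. -/
def IsKFunction (g : ℝ≥0 → ℝ≥0) : Prop :=
  Continuous g ∧ StrictMono g ∧ g 0 = 0

/-- A K∞-function: a K-function tending to infinity. -/
def IsKInfFunction (g : ℝ≥0 → ℝ≥0) : Prop :=
  IsKFunction g ∧ Filter.Tendsto g Filter.atTop Filter.atTop

/-- A KL-function: K∞ in the first argument, converging to zero in the second. -/
def IsKLFunction (h : ℝ≥0 → ℕ → ℝ≥0) : Prop :=
  (∀ k : ℕ, IsKInfFunction fun a => h a k) ∧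
    ∀ a : ℝ≥0, Filter.Tendsto (fun k => h a k) Filter.atTop (nhds 0)

/-!
Since `‖y_k‖ ≥ γ⁻¹(V(y_k))`, the values `v_k = V(y_k)` satisfy the scalar recursion
`v_{k+1} + 2 ρ(v_k) ≤ v_k + a` with `ρ` of class K∞ and `a = α(ŵ)`. If `ρ(v_k) ≤ a`, then
`v_{k+1} ≤ ρ⁻¹(a) + a`; otherwise half of the dissipation absorbs the disturbance and
`v_{k+1} + ρ(v_k) ≤ v_k`. Thus `v` never leaves the sublevel set `{v ≤ ρ⁻¹(a) + a}` once inside.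
Before it gets there it decreases, so each of the first `k` steps loses at least `ρ(v_k)`,
whence `v_k + k ρ(v_k) ≤ v_0`, i.e. `v_k ≤ (id + k ρ)⁻¹(v_0)`.
-/

section ComparisonFunctions

variable {f g : ℝ≥0 → ℝ≥0} {h : ℝ≥0 → ℕ → ℝ≥0}

theorem IsKFunction.comp (hf : IsKFunction f) (hg : IsKFunction g) :
    IsKFunction fun x => f (g x) :=
  ⟨hf.1.comp hg.1, hf.2.1.comp hg.2.1, by simp only [hg.2.2, hf.2.2]⟩

theorem IsKFunction.add (hf : IsKFunction f) (hg : IsKFunction g) :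
    IsKFunction fun x => f x + g x :=
  ⟨hf.1.add hg.1, hf.2.1.add hg.2.1, by simp only [hf.2.2, hg.2.2, add_zero]⟩

theorem IsKFunction.pos (hf : IsKFunction f) {x : ℝ≥0} (hx : 0 < x) : 0 < f x :=
  hf.2.2 ▸ hf.2.1 hx

theorem isKFunction_id : IsKFunction fun x => x :=
  ⟨continuous_id, strictMono_id, rfl⟩

theorem isKInfFunction_pow {p : ℕ} (hp : p ≠ 0) : IsKInfFunction fun x => x ^ p :=
  ⟨⟨continuous_pow p, fun _ _ hxy => pow_lt_pow_left₀ hxy zero_le hp, zero_pow hp⟩,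
    Filter.tendsto_pow_atTop hp⟩

theorem isKInfFunction_orderIso (e : ℝ≥0 ≃o ℝ≥0) : IsKInfFunction e :=
  ⟨⟨e.continuous, e.strictMono, e.map_bot⟩, e.tendsto_atTop⟩

theorem IsKInfFunction.comp (hf : IsKInfFunction f) (hg : IsKInfFunction g) :
    IsKInfFunction fun x => f (g x) :=
  ⟨hf.1.comp hg.1, hf.2.comp hg.2⟩

theorem IsKInfFunction.const_mul (hf : IsKInfFunction f) {c : ℝ≥0} (hc : 0 < c) :
    IsKInfFunction fun x => c * f x :=
  ⟨⟨hf.1.1.const_mul c, hf.1.2.1.const_mul hc, by simp only [hf.1.2.2, mul_zero]⟩,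
    hf.2.const_mul_atTop hc⟩

theorem IsKFunction.isKInfFunction_id_add_nat_mul (hf : IsKFunction f) (k : ℕ) :
    IsKInfFunction fun x => x + k * f x :=
  ⟨⟨continuous_id.add (hf.1.const_mul _),
      strictMono_id.add_monotone (hf.2.1.monotone.const_mul zero_le),
      by simp only [hf.2.2, mul_zero, add_zero]⟩,
    Filter.tendsto_atTop_mono (fun _ => le_self_add) Filter.tendsto_id⟩

theorem IsKInfFunction.surjective (hf : IsKInfFunction f) : Function.Surjective f := by
  refine hf.1.1.surjective hf.2 ?_
  rw [Filter.OrderBot.atBot_eq, Filter.tendsto_pure, Filter.eventually_pure]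
  exact hf.1.2.2

/-- A K∞-function as an order automorphism of `ℝ≥0`, which gives access to its inverse. -/
noncomputable def IsKInfFunction.toOrderIso (hf : IsKInfFunction f) : ℝ≥0 ≃o ℝ≥0 :=
  hf.1.2.1.orderIsoOfSurjective f hf.surjective

theorem IsKInfFunction.le_toOrderIso_symm_iff (hf : IsKInfFunction f) {x y : ℝ≥0} :
    x ≤ hf.toOrderIso.symm y ↔ f x ≤ y :=
  hf.toOrderIso.le_symm_apply

theorem IsKInfFunction.toOrderIso_symm_le_iff (hf : IsKInfFunction f) {x y : ℝ≥0} :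
    hf.toOrderIso.symm x ≤ y ↔ x ≤ f y :=
  hf.toOrderIso.symm_apply_le

theorem IsKInfFunction.comp_isKLFunction (hf : IsKInfFunction f) (hh : IsKLFunction h) :
    IsKLFunction fun a k => f (h a k) := by
  refine ⟨fun k => hf.comp (hh.1 k), fun a => ?_⟩
  simpa only [hf.1.2.2, Function.comp_def] using (hf.1.1.tendsto 0).comp (hh.2 a)

theorem IsKLFunction.comp_isKInfFunction (hh : IsKLFunction h) (hg : IsKInfFunction g) :
    IsKLFunction fun a k => h (g a) k :=
  ⟨fun k => (hh.1 k).comp hg, fun a => hh.2 (g a)⟩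

end ComparisonFunctions

section DecayBound

variable {ρ : ℝ≥0 → ℝ≥0}

/-- The inverse of `x ↦ x + k * ρ x`: the a priori bound, as a function of the initial value, on
the `k`-th term of a sequence `v` with `v (j + 1) + ρ (v j) ≤ v j`. -/
noncomputable def decayBound (hρ : IsKFunction ρ) (k : ℕ) : ℝ≥0 ≃o ℝ≥0 :=
  (hρ.isKInfFunction_id_add_nat_mul k).toOrderIso.symm

theorem le_decayBound_iff (hρ : IsKFunction ρ) {k : ℕ} {x b : ℝ≥0} :
    x ≤ decayBound hρ k b ↔ x + k * ρ x ≤ b :=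
  (hρ.isKInfFunction_id_add_nat_mul k).le_toOrderIso_symm_iff

theorem isKLFunction_decayBound (hρ : IsKFunction ρ) :
    IsKLFunction fun b k => decayBound hρ k b := by
  refine ⟨fun k => isKInfFunction_orderIso _, fun b => tendsto_order.2 ⟨?_, fun ε hε => ?_⟩⟩
  · exact fun a ha => absurd ha not_lt_zero
  · have hlarge : ∀ᶠ k : ℕ in Filter.atTop, b < k * ρ ε :=
      (tendsto_natCast_atTop_atTop.atTop_mul_const (hρ.pos hε)).eventually_gt_atTop b
    filter_upwards [hlarge] with k hk
    rw [← not_le, le_decayBound_iff, not_le]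
    exact hk.trans_le le_add_self

theorem le_decayBound_succ (hρ : IsKFunction ρ) {k : ℕ} {x y b : ℝ≥0}
    (hyx : y + ρ x ≤ x) (hx : x ≤ decayBound hρ k b) : y ≤ decayBound hρ (k + 1) b := by
  have hρyx : ρ y ≤ ρ x := hρ.2.1.monotone (le_self_add.trans hyx)
  rw [le_decayBound_iff] at hx ⊢
  calc y + (k + 1 : ℕ) * ρ y = y + ρ y + k * ρ y := by push_cast; ring
    _ ≤ y + ρ x + k * ρ x := by gcongr
    _ ≤ x + k * ρ x := by gcongr
    _ ≤ b := hx

theorem le_toOrderIso_symm_add_or_add_le (hρ : IsKInfFunction ρ) {x y a : ℝ≥0}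
    (hyx : y + 2 * ρ x ≤ x + a) : y ≤ hρ.toOrderIso.symm a + a ∨ y + ρ x ≤ x := by
  rcases le_total (ρ x) a with hsmall | hlarge
  · left
    calc y ≤ x + a := le_self_add.trans hyx
      _ ≤ hρ.toOrderIso.symm a + a := by gcongr; exact hρ.le_toOrderIso_symm_iff.2 hsmall
  · right
    refine le_of_add_le_add_right (a := ρ x) ?_
    calc y + ρ x + ρ x = y + 2 * ρ x := by ring
      _ ≤ x + a := hyx
      _ ≤ x + ρ x := by gcongr

theorem le_toOrderIso_symm_add_or_le_decayBound (hρ : IsKInfFunction ρ) {v : ℕ → ℝ≥0} {a : ℝ≥0}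
    (hv : ∀ k, v (k + 1) + 2 * ρ (v k) ≤ v k + a) (k : ℕ) :
    v k ≤ hρ.toOrderIso.symm a + a ∨ v k ≤ decayBound hρ.1 k (v 0) := by
  induction k with
  | zero => exact Or.inr ((le_decayBound_iff hρ.1).2 (by simp))
  | succ k ih =>
    rcases le_toOrderIso_symm_add_or_add_le hρ (hv k) with hsmall | hdecrease
    · exact Or.inl hsmall
    · exact ih.imp (le_self_add.trans hdecrease).trans (le_decayBound_succ hρ.1 hdecrease)

end DecayBound

theorem stmt_4_general {φ γ η α : ℝ≥0 → ℝ≥0} (hφ : IsKInfFunction φ) (hγ : IsKInfFunction γ)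
    (hη : IsKInfFunction η) (hα : IsKFunction α) :
    ∃ β : ℝ≥0 → ℕ → ℝ≥0, ∃ σ : ℝ≥0 → ℝ≥0, IsKLFunction β ∧ IsKFunction σ ∧
      ∀ (w : ℝ≥0) (v r : ℕ → ℝ≥0), (∀ k, φ (r k) ≤ v k) → (∀ k, v k ≤ γ (r k)) →
        (∀ k, v (k + 1) + η (r k) ≤ v k + α w) → ∀ k, r k ≤ β (r 0) k + σ w := by
  have hφinv : IsKInfFunction hφ.toOrderIso.symm := isKInfFunction_orderIso _
  have hρ : IsKInfFunction fun x => 2⁻¹ * η (hγ.toOrderIso.symm x) :=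
    (hη.comp (isKInfFunction_orderIso _)).const_mul (by positivity)
  refine ⟨fun s k => hφ.toOrderIso.symm (decayBound hρ.1 k (γ s)),
    fun w => hφ.toOrderIso.symm (hρ.toOrderIso.symm (α w) + α w),
    hφinv.comp_isKLFunction ((isKLFunction_decayBound hρ.1).comp_isKInfFunction hγ),
    hφinv.1.comp (((isKInfFunction_orderIso _).1.add isKFunction_id).comp hα), ?_⟩
  intro w v r hlow hup hdec k
  have hv (j : ℕ) : v (j + 1) + 2 * (2⁻¹ * η (hγ.toOrderIso.symm (v j))) ≤ v j + α w := by
    rw [mul_inv_cancel_left₀ two_ne_zero]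
    refine le_trans ?_ (hdec j)
    gcongr
    exact hη.1.2.1.monotone (hγ.toOrderIso_symm_le_iff.2 (hup j))
  have hr : r k ≤ hφ.toOrderIso.symm (v k) := hφ.le_toOrderIso_symm_iff.2 (hlow k)
  rcases le_toOrderIso_symm_add_or_le_decayBound hρ hv k with hsublevel | hdecay
  · exact (hr.trans (hφinv.1.2.1.monotone hsublevel)).trans le_add_self
  · have hinit : v k ≤ decayBound hρ.1 k (γ (r 0)) := hdecay.trans (OrderIso.monotone _ (hup 0))
    exact (hr.trans (hφinv.1.2.1.monotone hinit)).trans le_self_add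

/-- Discrete-time ISS from an ISS-Lyapunov function.
Given `c > 0`, a K∞-function `γ` and a K-function `α`, there exist a KL-function `β` and a
K-function `σ` (depending only on `c, γ, α`) such that for every `ŵ ≥ 0`, every
`V : ℝ^n → ℝ≥0` and every sequence `(y_k)` with `c‖y_k‖² ≤ V(y_k) ≤ γ(‖y_k‖)` and
`V(y_{k+1}) ≤ V(y_k) − c‖y_k‖² + α(ŵ)` for all `k`, one has
`‖y_k‖ ≤ β(‖y_0‖, k) + σ(ŵ)` for all `k`. -/
theorem stmt_4 (n : ℕ) (c : ℝ≥0) (hc : 0 < c)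
    (γ α : ℝ≥0 → ℝ≥0) (hγ : IsKInfFunction γ) (hα : IsKFunction α) :
    ∃ β : ℝ≥0 → ℕ → ℝ≥0, ∃ σ : ℝ≥0 → ℝ≥0, IsKLFunction β ∧ IsKFunction σ ∧
      ∀ (wHat : ℝ≥0) (V : EuclideanSpace ℝ (Fin n) → ℝ≥0)
        (y : ℕ → EuclideanSpace ℝ (Fin n)),
        (∀ k : ℕ, c * ‖y k‖₊ ^ 2 ≤ V (y k)) →
        (∀ k : ℕ, V (y k) ≤ γ ‖y k‖₊) →
        (∀ k : ℕ, V (y (k + 1)) ≤ V (y k) - c * ‖y k‖₊ ^ 2 + α wHat) →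
        ∀ k : ℕ, ‖y k‖₊ ≤ β ‖y 0‖₊ k + σ wHat := by
  have hsq : IsKInfFunction fun x => c * x ^ 2 := (isKInfFunction_pow two_ne_zero).const_mul hc
  obtain ⟨β, σ, hβ, hσ, hle⟩ := stmt_4_general hsq hγ hsq hα
  refine ⟨β, σ, hβ, hσ, fun w V y hlow hup hdec => hle w (V <| y ·) (‖y ·‖₊) hlow hup fun k => ?_⟩
  calc V (y (k + 1)) + c * ‖y k‖₊ ^ 2
      ≤ V (y k) - c * ‖y k‖₊ ^ 2 + α w + c * ‖y k‖₊ ^ 2 := by gcongr; exact hdec k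
    _ = V (y k) + α w := by rw [add_right_comm, tsub_add_cancel_of_le (hlow k)]
end

section
/- Inter-sample chaining bound (core of the gISS theorem). Let c > 0, b ≥ 0, let γ : ℝ≥0 → ℝ≥0 be a K∞-function, β : ℝ≥0 × ℕ → ℝ≥0 a KL-function, and δ : ℝ≥0 → ℝ≥0 a K-function. Let (t_k)_{k≥1} be a strictly increasing unbounded sequence of natural numbers, let x : ℕ → ℝ^n, set y_k := x(t_k), and let V : ℝ^n → ℝ≥0. Assume: (i) c‖ξ‖² ≤ V(ξ) ≤ γ(‖ξ‖) for all ξ ∈ ℝ^n; (ii) ‖y_k‖ ≤ β(‖y_1‖, k) + δ(b) for all k ≥ 1; (iii) for every k ≥ 1 and every t with t_k ≤ t ≤ t_{k+1}, there exists ξ ∈ ℝ^n with V(ξ) ≤ V(y_k) and ‖x(t) − ξ‖ ≤ b. Then for every t ≥ t_1, with n(t) := max{k ≥ 1 : t_k ≤ t}, one has ‖x(t)‖ ≤ √( γ( β(‖y_1‖, n(t)) + δ(b) ) / c ) + b. -/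
open scoped NNReal

theorem le_nnreal_sqrt_div_iff {a c d : ℝ≥0} (hc : 0 < c) :
    a ≤ NNReal.sqrt (d / c) ↔ c * a ^ 2 ≤ d := by
  rw [NNReal.le_sqrt_iff_sq_le, le_div_iff₀' hc]

theorem nnnorm_le_sqrt_div_of_apply_le {E : Type*} [NNNorm E] {c r : ℝ≥0} (hc : 0 < c)
    {γ : ℝ≥0 → ℝ≥0} (hγ : Monotone γ) {V : E → ℝ≥0}
    (hV_lower : ∀ ξ, c * ‖ξ‖₊ ^ 2 ≤ V ξ) (hV_upper : ∀ ξ, V ξ ≤ γ ‖ξ‖₊)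
    {ξ y : E} (hξy : V ξ ≤ V y) (hy : ‖y‖₊ ≤ r) :
    ‖ξ‖₊ ≤ NNReal.sqrt (γ r / c) := by
  rw [le_nnreal_sqrt_div_iff hc]
  calc c * ‖ξ‖₊ ^ 2 ≤ V ξ := hV_lower ξ
    _ ≤ V y := hξy
    _ ≤ γ ‖y‖₊ := hV_upper y
    _ ≤ γ r := hγ hy

theorem stmt_5_general {E T : Type*} [SeminormedAddGroup E] [Preorder T]
    {c b : ℝ≥0} (hc : 0 < c) {γ : ℝ≥0 → ℝ≥0} (hγ : Monotone γ) {r : ℕ → ℝ≥0}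
    {t : ℕ → T} {x : T → E} {V : E → ℝ≥0}
    (hV : ∀ ξ, c * ‖ξ‖₊ ^ 2 ≤ V ξ ∧ V ξ ≤ γ ‖ξ‖₊)
    (hy : ∀ k, 1 ≤ k → ‖x (t k)‖₊ ≤ r k)
    (hpred : ∀ k, 1 ≤ k → ∀ s, t k ≤ s → s ≤ t (k + 1) →
      ∃ ξ, V ξ ≤ V (x (t k)) ∧ ‖x s - ξ‖₊ ≤ b)
    {s : T} {N : ℕ} (hN : 1 ≤ N) (hNs : t N ≤ s) (hsN : s ≤ t (N + 1)) :
    ‖x s‖₊ ≤ NNReal.sqrt (γ (r N) / c) + b := by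
  obtain ⟨ξ, hξV, hξb⟩ := hpred N hN s hNs hsN
  have hξ : ‖ξ‖₊ ≤ NNReal.sqrt (γ (r N) / c) :=
    nnnorm_le_sqrt_div_of_apply_le hc hγ (fun η ↦ (hV η).1) (fun η ↦ (hV η).2) hξV (hy N hN)
  calc ‖x s‖₊ ≤ ‖ξ‖₊ + ‖x s - ξ‖₊ := nnnorm_le_nnnorm_add_nnnorm_sub' _ _
    _ ≤ NNReal.sqrt (γ (r N) / c) + b := add_le_add hξ hξb

/-- Inter-sample chaining bound (core of the gISS theorem).
`(t_k)_{k≥1}` are the (strictly increasing, unbounded) triggering times, `y_k = x(t_k)`,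
`V` satisfies `c‖ξ‖² ≤ V(ξ) ≤ γ(‖ξ‖)`, the sampled states satisfy the ISS bound
`‖y_k‖ ≤ β(‖y_1‖,k) + δ(b)`, and between consecutive triggers the state is within `b` of a
point `ξ` with `V(ξ) ≤ V(y_k)`.  Then for every `t ≥ t_1`, with
`n(t) = max{k ≥ 1 : t_k ≤ t}` (characterized by `1 ≤ N`, `t_N ≤ t < t_{N+1}`),
`‖x(t)‖ ≤ √(γ(β(‖y_1‖, n(t)) + δ(b))/c) + b`. -/
theorem stmt_5 (n : ℕ) (c b : ℝ≥0) (hc : 0 < c)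
    (γ : ℝ≥0 → ℝ≥0) (hγ : IsKInfFunction γ)
    (β : ℝ≥0 → ℕ → ℝ≥0) (hβ : IsKLFunction β)
    (δ : ℝ≥0 → ℝ≥0) (hδ : IsKFunction δ)
    (t : ℕ → ℕ)
    (ht : ∀ k : ℕ, 1 ≤ k → t k < t (k + 1))
    (htu : ∀ T : ℕ, ∃ k : ℕ, 1 ≤ k ∧ T ≤ t k)
    (x : ℕ → EuclideanSpace ℝ (Fin n))
    (V : EuclideanSpace ℝ (Fin n) → ℝ≥0)
    (hV : ∀ ξ : EuclideanSpace ℝ (Fin n), c * ‖ξ‖₊ ^ 2 ≤ V ξ ∧ V ξ ≤ γ ‖ξ‖₊)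
    (hy : ∀ k : ℕ, 1 ≤ k → ‖x (t k)‖₊ ≤ β ‖x (t 1)‖₊ k + δ b)
    (hpred : ∀ k : ℕ, 1 ≤ k → ∀ s : ℕ, t k ≤ s → s ≤ t (k + 1) →
      ∃ ξ : EuclideanSpace ℝ (Fin n), V ξ ≤ V (x (t k)) ∧ ‖x s - ξ‖₊ ≤ b) :
    ∀ s : ℕ, t 1 ≤ s → ∀ N : ℕ, 1 ≤ N → t N ≤ s → s < t (N + 1) →
      ‖x s‖₊ ≤ NNReal.sqrt (γ (β ‖x (t 1)‖₊ N + δ b) / c) + b := by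
  intro s _ N hN hNs hsN
  exact stmt_5_general (r := fun k ↦ β ‖x (t 1)‖₊ k + δ b) hc hγ.1.2.1.monotone hV hy hpred
    hN hNs hsN.le
end

section
/- Incremental contraction of the tracking controller. Let f : ℝ^n × ℝ^m → ℝ^n, κ : ℝ^n × ℝ^n × ℝ^m → ℝ^m, V_δ : ℝ^n × ℝ^n → ℝ≥0, and constants 0 < c_l ≤ c_u, κ_max ≥ 0, δ_loc > 0, ρ ∈ (0, 1) such that for all x, z ∈ ℝ^n with V_δ(x, z) ≤ δ_loc and all v ∈ ℝ^m: c_l‖x − z‖² ≤ V_δ(x, z) ≤ c_u‖x − z‖², ‖κ(x, z, v) − v‖ ≤ κ_max‖x − z‖, and V_δ(f(x, κ(x, z, v)), f(z, v)) ≤ ρ V_δ(x, z). Let (v_k)_{k∈ℕ} be any sequence in ℝ^m and define z_{k+1} := f(z_k, v_k) and x_{k+1} := f(x_k, κ(x_k, z_k, v_k)), with initial states satisfying V_δ(x_0, z_0) ≤ δ_loc. Then for all k ∈ ℕ: V_δ(x_k, z_k) ≤ ρ^k V_δ(x_0, z_0) ≤ δ_loc, ‖x_k − z_k‖² ≤ ρ^k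 (c_u/c_l) ‖x_0 − z_0‖², and ‖κ(x_k, z_k, v_k) − v_k‖² ≤ κ_max² ρ^k (c_u/c_l) ‖x_0 − z_0‖². -/
/-!
Contraction is only assumed on the sublevel set `{V ≤ δ}`, but since `ρ ≤ 1` it also makes that set
forward invariant, so the hypotheses are available along the whole trajectory and `V` decays
geometrically. The quadratic bounds, used from below at time `k` and from above at time `0`,
turn this decay into one of the squared distance, and the feedback bound transfers it to the input.
-/

section OrderedSemiring

variable {R : Type*} [Semiring R] [PartialOrder R] [IsOrderedRing R]

theorem mul_le_of_nonneg_of_le_one_of_le {a b c : R} (ha₀ : 0 ≤ a) (ha₁ : a ≤ 1) (hc : 0 ≤ c)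
    (hbc : b ≤ c) : a * b ≤ c :=
  (mul_le_mul_of_nonneg_left hbc ha₀).trans (mul_le_of_le_one_left hc ha₁)

theorem le_of_le_imp_succ_le_mul {u : ℕ → R} {δ ρ : R} (hρ₀ : 0 ≤ ρ) (hρ₁ : ρ ≤ 1)
    (hδ : 0 ≤ δ) (h₀ : u 0 ≤ δ) (hu : ∀ k, u k ≤ δ → u (k + 1) ≤ ρ * u k) (k : ℕ) :
    u k ≤ δ := by
  induction k with
  | zero => exact h₀
  | succ k ih => exact (hu k ih).trans (mul_le_of_nonneg_of_le_one_of_le hρ₀ hρ₁ hδ ih)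

end OrderedSemiring

theorem le_pow_mul_of_le_imp_succ_le_mul {u : ℕ → ℝ} {δ ρ : ℝ} (hρ₀ : 0 ≤ ρ) (hρ₁ : ρ ≤ 1)
    (hδ : 0 ≤ δ) (h₀ : u 0 ≤ δ) (hu : ∀ k, u k ≤ δ → u (k + 1) ≤ ρ * u k) (k : ℕ) :
    u k ≤ ρ ^ k * u 0 :=
  le_geom hρ₀ k fun i _ => hu i (le_of_le_imp_succ_le_mul hρ₀ hρ₁ hδ h₀ hu i)

theorem le_mul_div_mul_of_mul_le_of_le_mul {K : Type*} [Field K] [LinearOrder K]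
    [IsStrictOrderedRing K] {a b cl cu r v w : K} (hcl : 0 < cl) (hr : 0 ≤ r)
    (hlower : cl * a ≤ w) (hdecay : w ≤ r * v) (hupper : v ≤ cu * b) :
    a ≤ r * (cu / cl) * b :=
  calc
    a ≤ r * (cu * b) / cl :=
      (le_div_iff₀' hcl).2 <|
        (hlower.trans hdecay).trans (mul_le_mul_of_nonneg_left hupper hr)
    _ = r * (cu / cl) * b := by ring

theorem stmt_10_general {X U : Type*} [PseudoMetricSpace X] [PseudoMetricSpace U]
    {f : X → U → X} {κ : X → X → U → U} {V : X → X → ℝ} {cl cu κmax δ ρ : ℝ}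
    (hcl : 0 < cl) (hρ : ρ ∈ Set.Icc 0 1)
    (hinc : ∀ x z v, V x z ≤ δ →
      cl * dist x z ^ 2 ≤ V x z ∧ V x z ≤ cu * dist x z ^ 2 ∧
      dist (κ x z v) v ≤ κmax * dist x z ∧
      V (f x (κ x z v)) (f z v) ≤ ρ * V x z)
    {v : ℕ → U} {z x : ℕ → X} (hz : ∀ k, z (k + 1) = f (z k) (v k))
    (hx : ∀ k, x (k + 1) = f (x k) (κ (x k) (z k) (v k))) (h₀ : V (x 0) (z 0) ≤ δ) (k : ℕ) :
    V (x k) (z k) ≤ ρ ^ k * V (x 0) (z 0) ∧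
    ρ ^ k * V (x 0) (z 0) ≤ δ ∧
    dist (x k) (z k) ^ 2 ≤ ρ ^ k * (cu / cl) * dist (x 0) (z 0) ^ 2 ∧
    dist (κ (x k) (z k) (v k)) (v k) ^ 2 ≤
      κmax ^ 2 * ρ ^ k * (cu / cl) * dist (x 0) (z 0) ^ 2 := by
  obtain ⟨hρ₀, hρ₁⟩ := hρ
  obtain ⟨hlower₀, hupper₀, -, -⟩ := hinc (x 0) (z 0) (v 0) h₀
  have hδ : 0 ≤ δ := (by positivity : 0 ≤ cl * dist (x 0) (z 0) ^ 2).trans (hlower₀.trans h₀)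
  have hstep (i : ℕ) (hi : V (x i) (z i) ≤ δ) :
      V (x (i + 1)) (z (i + 1)) ≤ ρ * V (x i) (z i) := by
    rw [hx, hz]
    exact (hinc _ _ (v i) hi).2.2.2
  have hdecay : V (x k) (z k) ≤ ρ ^ k * V (x 0) (z 0) :=
    le_pow_mul_of_le_imp_succ_le_mul (u := fun i => V (x i) (z i)) hρ₀ hρ₁ hδ h₀ hstep k
  have hbound : ρ ^ k * V (x 0) (z 0) ≤ δ :=
    mul_le_of_nonneg_of_le_one_of_le (pow_nonneg hρ₀ k) (pow_le_one₀ hρ₀ hρ₁) hδ h₀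
  obtain ⟨hlower, -, hinput, -⟩ := hinc (x k) (z k) (v k) (hdecay.trans hbound)
  have hstate : dist (x k) (z k) ^ 2 ≤ ρ ^ k * (cu / cl) * dist (x 0) (z 0) ^ 2 :=
    le_mul_div_mul_of_mul_le_of_le_mul hcl (pow_nonneg hρ₀ k) hlower hdecay hupper₀
  refine ⟨hdecay, hbound, hstate, ?_⟩
  calc
    dist (κ (x k) (z k) (v k)) (v k) ^ 2 ≤ (κmax * dist (x k) (z k)) ^ 2 := by gcongr
    _ = κmax ^ 2 * dist (x k) (z k) ^ 2 := mul_pow ..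
    _ ≤ κmax ^ 2 * (ρ ^ k * (cu / cl) * dist (x 0) (z 0) ^ 2) := by gcongr
    _ = κmax ^ 2 * ρ ^ k * (cu / cl) * dist (x 0) (z 0) ^ 2 := by ring

/-- Incremental contraction of the tracking controller.
Under the local incremental stability assumption (δ-Lyapunov function `V_δ` with bounds
`c_l‖x−z‖² ≤ V_δ(x,z) ≤ c_u‖x−z‖²`, feedback deviation bound `‖κ(x,z,v) − v‖ ≤ κ_max‖x−z‖`
and contraction `V_δ(f(x,κ(x,z,v)), f(z,v)) ≤ ρV_δ(x,z)` whenever `V_δ(x,z) ≤ δ_loc`),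
for any reference `z_{k+1} = f(z_k, v_k)` and tracking trajectory
`x_{k+1} = f(x_k, κ(x_k, z_k, v_k))` with `V_δ(x_0, z_0) ≤ δ_loc` one has, for all `k`:
`V_δ(x_k,z_k) ≤ ρ^k V_δ(x_0,z_0) ≤ δ_loc`,
`‖x_k − z_k‖² ≤ ρ^k (c_u/c_l)‖x_0 − z_0‖²`, and
`‖κ(x_k,z_k,v_k) − v_k‖² ≤ κ_max² ρ^k (c_u/c_l)‖x_0 − z_0‖²`. -/
theorem stmt_10 (n m : ℕ)
    (f : EuclideanSpace ℝ (Fin n) → EuclideanSpace ℝ (Fin m) → EuclideanSpace ℝ (Fin n))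
    (κ : EuclideanSpace ℝ (Fin n) → EuclideanSpace ℝ (Fin n) →
      EuclideanSpace ℝ (Fin m) → EuclideanSpace ℝ (Fin m))
    (Vδ : EuclideanSpace ℝ (Fin n) → EuclideanSpace ℝ (Fin n) → ℝ)
    (hVδnn : ∀ x z, 0 ≤ Vδ x z)
    (cl cu κmax δloc ρ : ℝ)
    (hcl : 0 < cl) (hclcu : cl ≤ cu) (hκmax : 0 ≤ κmax) (hδloc : 0 < δloc)
    (hρ : ρ ∈ Set.Ioo (0 : ℝ) 1)
    (hinc : ∀ (x z : EuclideanSpace ℝ (Fin n)) (v : EuclideanSpace ℝ (Fin m)),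
      Vδ x z ≤ δloc →
        cl * ‖x - z‖ ^ 2 ≤ Vδ x z ∧ Vδ x z ≤ cu * ‖x - z‖ ^ 2 ∧
        ‖κ x z v - v‖ ≤ κmax * ‖x - z‖ ∧
        Vδ (f x (κ x z v)) (f z v) ≤ ρ * Vδ x z)
    (v : ℕ → EuclideanSpace ℝ (Fin m))
    (z x : ℕ → EuclideanSpace ℝ (Fin n))
    (hz : ∀ k : ℕ, z (k + 1) = f (z k) (v k))
    (hx : ∀ k : ℕ, x (k + 1) = f (x k) (κ (x k) (z k) (v k)))
    (h0 : Vδ (x 0) (z 0) ≤ δloc) :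
    ∀ k : ℕ,
      Vδ (x k) (z k) ≤ ρ ^ k * Vδ (x 0) (z 0) ∧
      ρ ^ k * Vδ (x 0) (z 0) ≤ δloc ∧
      ‖x k - z k‖ ^ 2 ≤ ρ ^ k * (cu / cl) * ‖x 0 - z 0‖ ^ 2 ∧
      ‖κ (x k) (z k) (v k) - v k‖ ^ 2 ≤ κmax ^ 2 * ρ ^ k * (cu / cl) * ‖x 0 - z 0‖ ^ 2 := by
  simp only [← dist_eq_norm] at hinc ⊢
  exact stmt_10_general hcl (Set.Ioo_subset_Icc_self hρ) hinc hz hx h0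
end

section
/- Shifted-trajectory feasibility and cost monotonicity. Let f : ℝ^n × ℝ^m → ℝ^n; let H (q×n) and L (r×m) be real matrices; let P, Q ∈ ℝ^{n×n}, R ∈ ℝ^{m×m} be symmetric positive definite; let ρ ∈ (0,1), ε > 0, ε_k := ε(1−(√ρ)^k)/(1−√ρ), N ≥ 1, α_f > 0, X_f := {x : xᵀPx ≤ α_f}, and κ_f : ℝ^n → ℝ^m such that for all x ∈ X_f: f(x, κ_f(x)) ∈ X_f, f(x,κ_f(x))ᵀPf(x,κ_f(x)) ≤ xᵀPx − xᵀQx − κ_f(x)ᵀRκ_f(x), Hx ≤ (1−ε_N)·𝟙, and Lκ_f(x) ≤ (1−ε_N)·𝟙. Suppose (x_k)_{k∈ℕ}, (u_k)_{k∈ℕ} satisfy x_{k+1} = f(x_k, u_k) for all k, H x_k ≤ (1−ε_k)·𝟙 and L u_k ≤ (1−ε_k)·𝟙 for 0 ≤ k ≤ N−1, x_N ∈ X_f, and u_k = κ_f(x_k) for k ≥ N. Fix 1 ≤ j ≤ N and define x'_k := x_{k+j}, u'_k := u_{k+j}. Then (x', u') is feasible for the N-step problem with initial state x_j: x'_{k+1}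 = f(x'_k, u'_k), H x'_k ≤ (1−ε_k)·𝟙 and L u'_k ≤ (1−ε_k)·𝟙 for 0 ≤ k ≤ N−1, and x'_N ∈ X_f; moreover, with ℓ(x,u) := xᵀQx + uᵀRu, Σ_{k=0}^{N−1} ℓ(x'_k, u'_k) + x'_Nᵀ P x'_N ≤ Σ_{k=0}^{N−1} ℓ(x_k, u_k) + x_Nᵀ P x_N − Σ_{k=0}^{j−1} ℓ(x_k, u_k). -/
open Matrix

/-!
Since the tightening `ε_k` is nondecreasing, the constraint sets shrink with the time index, so
reading `(x_{k+j}, u_{k+j})` at the earlier time `k` only relaxes the constraints; from time `N`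
on, the invariance of the terminal set supplies the constraints at the tightest level `N`. The
accumulated stage cost plus terminal cost is nonincreasing in the horizon from `N` on, and its
value at horizon `N + j` is the elapsed cost plus the cost of the shifted trajectory.
-/

/-- The part of the normalized polyhedron `{x | A x ≤ 𝟙}` left after tightening every constraint by
`δ`: the states (or inputs) admissible in the tightened problem. -/
def tightenedPolyhedron {ι n : Type*} [Fintype n] (A : Matrix ι n ℝ) (δ : ℝ) :
    Set (EuclideanSpace ℝ n) :=
  {x | ∀ i, A.mulVec x i ≤ 1 - δ}

theorem antitone_tightenedPolyhedron {ι n : Type*} [Fintype n] (A : Matrix ι n ℝ) :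
    Antitone (tightenedPolyhedron A) :=
  fun _ _ hδ _ hx i => (hx i).trans (sub_le_sub_left hδ 1)

theorem monotone_mul_one_sub_pow_div_one_sub {K : Type*} [Field K] [LinearOrder K]
    [IsStrictOrderedRing K] {ε s : K} (hε : 0 ≤ ε) (hs₀ : 0 ≤ s) (hs₁ : s < 1) :
    Monotone fun k : ℕ => ε * (1 - s ^ k) / (1 - s) := by
  intro a b hab
  have hpow : s ^ b ≤ s ^ a := pow_le_pow_of_le_one hs₀ hs₁.le hab
  have hs : 0 ≤ 1 - s := sub_nonneg.2 hs₁.le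
  exact div_le_div_of_nonneg_right
    (mul_le_mul_of_nonneg_left (sub_le_sub_left hpow 1) hε) hs

theorem antitoneOn_sum_range_add {M : Type*} [AddCommMonoid M] [Preorder M] [AddLeftMono M]
    {c V : ℕ → M} {N : ℕ} (h : ∀ k, N ≤ k → c k + V (k + 1) ≤ V k) :
    AntitoneOn (fun k => ∑ i ∈ Finset.range k, c i + V k) (Set.Ici N) :=
  antitoneOn_nat_Ici_of_succ_le fun k hk => by
    simpa only [Finset.sum_range_succ, add_assoc] using
      add_le_add_right (h k hk) (∑ i ∈ Finset.range k, c i)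

section Trajectory

variable {X U M : Type*} {f : X → U → X} {Z : ℕ → Set (X × U)} {Xf : Set X} {κ : X → U}
  {N : ℕ} {x : ℕ → X} {u : ℕ → U}

/-- Feasibility of a state-input trajectory for the `N`-step problem with dynamics `f`, stage
constraints `Z k` and terminal set `Xf`. The initial state is `x 0`; the trajectory is infinite and
obeys the dynamics also beyond the horizon, where it is unconstrained. -/
structure IsFeasibleTrajectory (f : X → U → X) (Z : ℕ → Set (X × U)) (Xf : Set X) (N : ℕ)
    (x : ℕ → X) (u : ℕ → U) : Prop where
  dynamics : ∀ k, x (k + 1) = f (x k) (u k)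
  constraints : ∀ k < N, (x k, u k) ∈ Z k
  terminal : x N ∈ Xf

namespace IsFeasibleTrajectory

theorem mem_terminalSet (h : IsFeasibleTrajectory f Z Xf N x u)
    (hinv : ∀ y ∈ Xf, f y (κ y) ∈ Xf) (hu : ∀ k, N ≤ k → u k = κ (x k)) {k : ℕ} (hk : N ≤ k) :
    x k ∈ Xf := by
  induction k, hk using Nat.le_induction with
  | base => exact h.terminal
  | succ k hk ih =>
    rw [h.dynamics, hu k hk]
    exact hinv _ ih

theorem shift (h : IsFeasibleTrajectory f Z Xf N x u) (hZ : Antitone Z)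
    (hinv : ∀ y ∈ Xf, f y (κ y) ∈ Xf) (hcon : ∀ y ∈ Xf, (y, κ y) ∈ Z N)
    (hu : ∀ k, N ≤ k → u k = κ (x k)) (j : ℕ) :
    IsFeasibleTrajectory f Z Xf N (fun k => x (k + j)) (fun k => u (k + j)) where
  dynamics k := by simpa only [Nat.add_right_comm] using h.dynamics (k + j)
  constraints k hk := by
    rcases lt_or_ge (k + j) N with hlt | hge
    · exact hZ (Nat.le_add_right k j) (h.constraints _ hlt)
    · rw [hu _ hge]
      exact hZ hk.le (hcon _ (h.mem_terminalSet hinv hu hge))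
  terminal := h.mem_terminalSet hinv hu (Nat.le_add_right N j)

theorem sum_add_cost_shift_le [AddCommMonoid M] [Preorder M] [AddLeftMono M]
    {ℓ : X → U → M} {V : X → M} (h : IsFeasibleTrajectory f Z Xf N x u)
    (hinv : ∀ y ∈ Xf, f y (κ y) ∈ Xf)
    (hdec : ∀ y ∈ Xf, ℓ y (κ y) + V (f y (κ y)) ≤ V y)
    (hu : ∀ k, N ≤ k → u k = κ (x k)) (j : ℕ) :
    ∑ k ∈ Finset.range j, ℓ (x k) (u k) +
        (∑ k ∈ Finset.range N, ℓ (x (k + j)) (u (k + j)) + V (x (N + j))) ≤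
      ∑ k ∈ Finset.range N, ℓ (x k) (u k) + V (x N) := by
  have hstep : ∀ k, N ≤ k → ℓ (x k) (u k) + V (x (k + 1)) ≤ V (x k) := by
    intro k hk
    rw [h.dynamics, hu k hk]
    exact hdec _ (h.mem_terminalSet hinv hu hk)
  calc
    _ = ∑ k ∈ Finset.range (N + j), ℓ (x k) (u k) + V (x (N + j)) := by
      rw [← add_assoc, Nat.add_comm N j, Finset.sum_range_add]
      simp only [Nat.add_comm j]
    _ ≤ _ := antitoneOn_sum_range_add (c := fun k => ℓ (x k) (u k)) (V := fun k => V (x k)) hstep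
      Set.self_mem_Ici (Nat.le_add_right N j) (Nat.le_add_right N j)

end IsFeasibleTrajectory

theorem stmt_15_general [AddCommMonoid M] [Preorder M] [AddLeftMono M]
    {ℓ : X → U → M} {V : X → M} (hZ : Antitone Z)
    (hinv : ∀ y ∈ Xf, f y (κ y) ∈ Xf) (hdec : ∀ y ∈ Xf, ℓ y (κ y) + V (f y (κ y)) ≤ V y)
    (hcon : ∀ y ∈ Xf, (y, κ y) ∈ Z N)
    (h : IsFeasibleTrajectory f Z Xf N x u) (hu : ∀ k, N ≤ k → u k = κ (x k)) (j : ℕ) :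
    IsFeasibleTrajectory f Z Xf N (fun k => x (k + j)) (fun k => u (k + j)) ∧
      ∑ k ∈ Finset.range j, ℓ (x k) (u k) +
          (∑ k ∈ Finset.range N, ℓ (x (k + j)) (u (k + j)) + V (x (N + j))) ≤
        ∑ k ∈ Finset.range N, ℓ (x k) (u k) + V (x N) :=
  ⟨h.shift hZ hinv hcon hu j, h.sum_add_cost_shift_le hinv hdec hu j⟩

end Trajectory

/-- Shifted-trajectory feasibility and cost monotonicity.
Given tightened constraints `ε_k = ε(1−(√ρ)^k)/(1−√ρ)`, a terminal set
`X_f = {x : xᵀPx ≤ α_f}` that is invariant under the terminal controller `κ_f`, satisfies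
the terminal cost decrease and the tightened constraints at level `ε_N`, and a feasible
trajectory `(x, u)` (dynamics, tightened constraints for `0 ≤ k ≤ N−1`, `x_N ∈ X_f`,
`u_k = κ_f(x_k)` for `k ≥ N`): for every shift `1 ≤ j ≤ N`, the shifted trajectory
`x'_k = x_{k+j}`, `u'_k = u_{k+j}` is feasible for the `N`-step problem with initial state
`x_j`, and its cost satisfies
`Σ_{k<N} ℓ(x'_k,u'_k) + x'_NᵀPx'_N ≤ Σ_{k<N} ℓ(x_k,u_k) + x_NᵀPx_N − Σ_{k<j} ℓ(x_k,u_k)`. -/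
theorem stmt_15 (n m q r : ℕ)
    (f : EuclideanSpace ℝ (Fin n) → EuclideanSpace ℝ (Fin m) → EuclideanSpace ℝ (Fin n))
    (H : Matrix (Fin q) (Fin n) ℝ) (L : Matrix (Fin r) (Fin m) ℝ)
    (P Q : Matrix (Fin n) (Fin n) ℝ) (R : Matrix (Fin m) (Fin m) ℝ)
    (hP : P.PosDef) (hQ : Q.PosDef) (hR : R.PosDef)
    (ρ ε : ℝ) (hρ : ρ ∈ Set.Ioo (0 : ℝ) 1) (hε : 0 < ε)
    (εk : ℕ → ℝ)
    (hεk : ∀ k : ℕ, εk k = ε * (1 - Real.sqrt ρ ^ k) / (1 - Real.sqrt ρ))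
    (N : ℕ) (hN : 1 ≤ N)
    (αf : ℝ) (hαf : 0 < αf)
    (Xf : Set (EuclideanSpace ℝ (Fin n)))
    (hXf : Xf = {x : EuclideanSpace ℝ (Fin n) | x ⬝ᵥ P.mulVec x ≤ αf})
    (κf : EuclideanSpace ℝ (Fin n) → EuclideanSpace ℝ (Fin m))
    (hterm : ∀ x ∈ Xf,
      f x (κf x) ∈ Xf ∧
      f x (κf x) ⬝ᵥ P.mulVec (f x (κf x)) ≤
        x ⬝ᵥ P.mulVec x - x ⬝ᵥ Q.mulVec x - κf x ⬝ᵥ R.mulVec (κf x) ∧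
      (∀ i : Fin q, H.mulVec x i ≤ 1 - εk N) ∧
      (∀ i : Fin r, L.mulVec (κf x) i ≤ 1 - εk N))
    (x : ℕ → EuclideanSpace ℝ (Fin n)) (u : ℕ → EuclideanSpace ℝ (Fin m))
    (hdyn : ∀ k : ℕ, x (k + 1) = f (x k) (u k))
    (hxcon : ∀ k : ℕ, k ≤ N - 1 → ∀ i : Fin q, H.mulVec (x k) i ≤ 1 - εk k)
    (hucon : ∀ k : ℕ, k ≤ N - 1 → ∀ i : Fin r, L.mulVec (u k) i ≤ 1 - εk k)
    (hxN : x N ∈ Xf)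
    (huterm : ∀ k : ℕ, N ≤ k → u k = κf (x k))
    (j : ℕ) (hj1 : 1 ≤ j) (hjN : j ≤ N)
    (x' : ℕ → EuclideanSpace ℝ (Fin n)) (u' : ℕ → EuclideanSpace ℝ (Fin m))
    (hx' : ∀ k : ℕ, x' k = x (k + j)) (hu' : ∀ k : ℕ, u' k = u (k + j)) :
    (∀ k : ℕ, x' (k + 1) = f (x' k) (u' k)) ∧
    (∀ k : ℕ, k ≤ N - 1 →
      (∀ i : Fin q, H.mulVec (x' k) i ≤ 1 - εk k) ∧
      (∀ i : Fin r, L.mulVec (u' k) i ≤ 1 - εk k)) ∧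
    x' N ∈ Xf ∧
    (∑ k ∈ Finset.range N,
        (x' k ⬝ᵥ Q.mulVec (x' k) + u' k ⬝ᵥ R.mulVec (u' k))) +
        x' N ⬝ᵥ P.mulVec (x' N) ≤
      (∑ k ∈ Finset.range N,
        (x k ⬝ᵥ Q.mulVec (x k) + u k ⬝ᵥ R.mulVec (u k))) +
        x N ⬝ᵥ P.mulVec (x N) -
        ∑ k ∈ Finset.range j,
          (x k ⬝ᵥ Q.mulVec (x k) + u k ⬝ᵥ R.mulVec (u k)) := by
  obtain rfl : x' = fun k => x (k + j) := funext hx'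
  obtain rfl : u' = fun k => u (k + j) := funext hu'
  simp only [Nat.le_sub_one_iff_lt hN] at hxcon hucon ⊢
  have hε_mono : Monotone εk := by
    rw [funext hεk]
    exact monotone_mul_one_sub_pow_div_one_sub hε.le ρ.sqrt_nonneg
      ((Real.sqrt_lt_sqrt hρ.1.le hρ.2).trans_eq Real.sqrt_one)
  have hZ : Antitone fun k => tightenedPolyhedron H (εk k) ×ˢ tightenedPolyhedron L (εk k) :=
    ((antitone_tightenedPolyhedron H).comp_monotone hε_mono).set_prod
      ((antitone_tightenedPolyhedron L).comp_monotone hε_mono)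
  obtain ⟨hfeasible, hcost⟩ := stmt_15_general
    (ℓ := fun (y : EuclideanSpace ℝ (Fin n)) (v : EuclideanSpace ℝ (Fin m)) =>
      y ⬝ᵥ Q.mulVec y + v ⬝ᵥ R.mulVec v)
    (V := fun y : EuclideanSpace ℝ (Fin n) => y ⬝ᵥ P.mulVec y) hZ
    (fun y hy => (hterm y hy).1) (fun y hy => by linarith [(hterm y hy).2.1])
    (fun y hy => (hterm y hy).2.2)
    ⟨hdyn, fun k hk => ⟨hxcon k hk, hucon k hk⟩, hxN⟩ huterm j
  exact ⟨hfeasible.dynamics, hfeasible.constraints, hfeasible.terminal,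
    le_sub_iff_add_le'.2 hcost⟩
end
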